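/- Fix M ∈ ℕ, a feature vector w : Fin M → ℝ, an observation a > 0, and α : Fin M → ℝ. For β : Fin M → ℝ write ⟨β,w⟩ = ∑ m, β m · w m. Then the function G : (Fin M → ℝ) → ℝ defined by G(β) = Real.log (ProbabilityTheory.gammaPDFReal (Real.exp ⟨α,w⟩) (Real.exp (−⟨β,w⟩)) a) is differentiable at every β, and its m-th partial derivative at β equals w m · (a · Real.exp (−⟨β,w⟩) − Real.exp ⟨α,w⟩). -/

import Mathlib

open Finset
open ProbabilityTheory

section GammaLogDensity

variable {k r x : ℝ}

lemma log_gammaPDFReal (hk : 0 < k) (hr : 0 < r) (hx : 0 < x) :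
    Real.log (gammaPDFReal k r x) =
      k * Real.log r - Real.log (Real.Gamma k) + (k - 1) * Real.log x - r * x := by
  have hrk : r ^ k ≠ 0 := (Real.rpow_pos_of_pos hr k).ne'
  have hxk : x ^ (k - 1) ≠ 0 := (Real.rpow_pos_of_pos hx (k - 1)).ne'
  have hΓ : Real.Gamma k ≠ 0 := (Real.Gamma_pos_of_pos hk).ne'
  rw [gammaPDFReal, if_pos hx.le,
    Real.log_mul (mul_ne_zero (div_ne_zero hrk hΓ) hxk) (Real.exp_ne_zero _),
    Real.log_mul (div_ne_zero hrk hΓ) hxk, Real.log_div hrk hΓ,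
    Real.log_rpow hr, Real.log_rpow hx, Real.log_exp, ← sub_eq_add_neg]

lemma hasDerivAt_log_gammaPDFReal_rate (hk : 0 < k) (hr : 0 < r) (hx : 0 < x) :
    HasDerivAt (fun r ↦ Real.log (gammaPDFReal k r x)) (k / r - x) r := by
  have h_formula : HasDerivAt
      (fun r ↦ k * Real.log r - Real.log (Real.Gamma k) + (k - 1) * Real.log x - r * x)
      (k * r⁻¹ - x) r :=
    ((((Real.hasDerivAt_log hr.ne').const_mul k).sub_const _).add_const _).fun_sub
      (hasDerivAt_mul_const x)
  rw [div_eq_mul_inv]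
  refine h_formula.congr_of_eventuallyEq ?_
  filter_upwards [lt_mem_nhds hr] with s hs using log_gammaPDFReal hk hs hx

lemma hasDerivAt_log_gammaPDFReal_logScale (hk : 0 < k) (hx : 0 < x) (t : ℝ) :
    HasDerivAt (fun t ↦ Real.log (gammaPDFReal k (Real.exp (-t)) x))
      (x * Real.exp (-t) - k) t := by
  have h_rate : HasDerivAt (fun t ↦ Real.exp (-t)) (Real.exp (-t) * -1) t :=
    (hasDerivAt_neg t).exp
  have h_chain : (k / Real.exp (-t) - x) * (Real.exp (-t) * -1) = x * Real.exp (-t) - k := by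
    rw [← mul_assoc, sub_mul, div_mul_cancel₀ k (Real.exp_ne_zero (-t))]
    ring
  rw [← h_chain]
  exact (hasDerivAt_log_gammaPDFReal_rate hk (Real.exp_pos (-t)) hx).comp t h_rate

end GammaLogDensity

section LinearPredictor

variable {𝕜 ι : Type*} [NontriviallyNormedField 𝕜] [Fintype ι]

lemma hasFDerivAt_sum_mul_const (w β : ι → 𝕜) :
    HasFDerivAt (fun β : ι → 𝕜 ↦ ∑ i, β i * w i)
      (∑ i, w i • (ContinuousLinearMap.proj i : (ι → 𝕜) →L[𝕜] 𝕜)) β :=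
  HasFDerivAt.fun_sum fun i _ ↦ (hasFDerivAt_apply i β).mul_const (w i)

lemma sum_smul_proj_single_one [DecidableEq ι] (w : ι → 𝕜) (m : ι) :
    (∑ i, w i • (ContinuousLinearMap.proj i : (ι → 𝕜) →L[𝕜] 𝕜)) (Pi.single m 1) = w m := by
  simp [Pi.single_apply]

end LinearPredictor

theorem gamma_loglik_partial_deriv_beta_general {ι : Type*} [Fintype ι] [DecidableEq ι]
    (w : ι → ℝ) {k a : ℝ} (hk : 0 < k) (ha : 0 < a) (β : ι → ℝ) :
    DifferentiableAt ℝ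
        (fun β : ι → ℝ ↦ Real.log (gammaPDFReal k (Real.exp (-(∑ i, β i * w i))) a)) β ∧
      ∀ m : ι,
        fderiv ℝ (fun β : ι → ℝ ↦ Real.log (gammaPDFReal k (Real.exp (-(∑ i, β i * w i))) a)) β
            (Pi.single m 1) =
          w m * (a * Real.exp (-(∑ i, β i * w i)) - k) := by
  have h_loglik : HasFDerivAt
      (fun β : ι → ℝ ↦ Real.log (gammaPDFReal k (Real.exp (-(∑ i, β i * w i))) a))
      ((a * Real.exp (-(∑ i, β i * w i)) - k) •
        ∑ i, w i • (ContinuousLinearMap.proj i : (ι → ℝ) →L[ℝ] ℝ)) β :=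
    (hasDerivAt_log_gammaPDFReal_logScale hk ha _).comp_hasFDerivAt β
      (hasFDerivAt_sum_mul_const w β)
  refine ⟨h_loglik.differentiableAt, fun m ↦ ?_⟩
  rw [h_loglik.fderiv, smul_apply, sum_smul_proj_single_one, smul_eq_mul, mul_comm]

/-- The log gamma density with shape `exp⟨α,w⟩` and rate `exp(−⟨β,w⟩)` (i.e. scale
`exp⟨β,w⟩`), as a function of the scale regression weights `β`, is differentiable
everywhere, and its `m`-th partial derivative at `β` equals
`w m · (a · exp(−⟨β,w⟩) − exp⟨α,w⟩)`. -/
theorem gamma_loglik_partial_deriv_beta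
    (M : ℕ) (w : Fin M → ℝ) (a : ℝ) (ha : 0 < a) (α : Fin M → ℝ) :
    ∀ β : Fin M → ℝ,
      DifferentiableAt ℝ (fun β : Fin M → ℝ =>
          Real.log (ProbabilityTheory.gammaPDFReal
            (Real.exp (∑ m, α m * w m)) (Real.exp (-(∑ m, β m * w m))) a)) β ∧
      ∀ m : Fin M,
        fderiv ℝ (fun β : Fin M → ℝ =>
            Real.log (ProbabilityTheory.gammaPDFReal
              (Real.exp (∑ m, α m * w m)) (Real.exp (-(∑ m, β m * w m))) a)) β
          (Pi.single m 1) =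
        w m * (a * Real.exp (-(∑ m, β m * w m)) - Real.exp (∑ m, α m * w m)) :=
  gamma_loglik_partial_deriv_beta_general w (Real.exp_pos _) ha
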